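/- arXiv:1103.2913 — 7 statements merged into one kernel-verified Lean document; each statement's English description precedes it below -/
import Mathlib

section
/- Let G be a simple graph, let a and b be distinct vertices of G, and let S be an (a,b) vertex separator of G. Let C₁ and C₂ be the connected components of G \ S containing a and b respectively. Then S is a minimal (a,b) vertex separator if and only if for every vertex v ∈ S there exists a vertex u₁ ∈ C₁ adjacent to v and a vertex u₂ ∈ C₂ adjacent to v. -/
/-!
If `S` is minimal and `v ∈ S`, then `S \ {v}` does not separate, so some walk from `a` to `b`
meets `S` in no vertex other than `v`. Following it from `a` until it first meets `S`
(`ReachAvoid.or_exists_adj`), which must happen at `v`, gives a neighbour of `v` in the component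
of `a`; the reversed walk gives one in the component of `b`. Conversely, if `S' ⊂ S` and
`v ∈ S \ S'` has neighbours `u₁`, `u₂` in the two components, then `a ⋯ u₁ v u₂ ⋯ b` is a walk
avoiding `S'`, so `S'` is not a separator.
-/

/-- Reachability in `G` by a walk all of whose vertices avoid the set `S`
(i.e. reachability in the induced subgraph `G \ S`). -/
def ReachAvoid {V : Type*} (G : SimpleGraph V) (S : Set V) (x y : V) : Prop :=
  ∃ w : G.Walk x y, ∀ z ∈ w.support, z ∉ S

/-- `S` is an `(a,b)` vertex separator: `a, b ∉ S` and `a`, `b` lie in distinct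
connected components of `G \ S`. -/
def IsABSeparator {V : Type*} (G : SimpleGraph V) (a b : V) (S : Set V) : Prop :=
  a ∉ S ∧ b ∉ S ∧ ¬ ReachAvoid G S a b

/-- `S` is a minimal `(a,b)` vertex separator: it is one, and no proper subset is. -/
def IsMinABSeparator {V : Type*} (G : SimpleGraph V) (a b : V) (S : Set V) : Prop :=
  IsABSeparator G a b S ∧ ∀ S' ⊂ S, ¬ IsABSeparator G a b S'

/-- `S` is a stable (independent) set of vertices of `G`. -/
def IsStableSet {V : Type*} (G : SimpleGraph V) (S : Set V) : Prop :=
  ∀ u ∈ S, ∀ v ∈ S, ¬ G.Adj u v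

/-- `W` induces a 1-chord subgraph of `G`: a cycle of length `n ≥ 4`
(vertices `f 0, f 1, …` in cyclic order) together with exactly one chord
`{f i, f j}`, and no other edges among the vertices of `W` (induced). -/
def IsOneChordSet {V : Type*} (G : SimpleGraph V) (W : Set V) : Prop :=
  ∃ n : ℕ, 4 ≤ n ∧ ∃ f : ZMod n → V, Function.Injective f ∧ Set.range f = W ∧
    ∃ i j : ZMod n, j ≠ i ∧ j ≠ i + 1 ∧ i ≠ j + 1 ∧
      ∀ x y : ZMod n, G.Adj (f x) (f y) ↔
        ((y = x + 1 ∨ x = y + 1) ∨ (x = i ∧ y = j) ∨ (x = j ∧ y = i))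

/-- `G` is 1-chord free: no induced cycle of length at least 4 with exactly one chord. -/
def OneChordFree {V : Type*} (G : SimpleGraph V) : Prop :=
  ∀ W : Set V, ¬ IsOneChordSet G W

namespace ReachAvoid

variable {V : Type*} {G : SimpleGraph V} {S T : Set V} {x y z v : V}

theorem symm (h : ReachAvoid G S x y) : ReachAvoid G S y x := by
  obtain ⟨w, hw⟩ := h
  exact ⟨w.reverse, by simpa using hw⟩

theorem trans (h : ReachAvoid G S x y) (h' : ReachAvoid G S y z) : ReachAvoid G S x z := by
  obtain ⟨w, hw⟩ := h
  obtain ⟨w', hw'⟩ := h'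
  refine ⟨w.append w', fun t ht => ?_⟩
  rcases (SimpleGraph.Walk.mem_support_append_iff w w').mp ht with ht | ht
  · exact hw t ht
  · exact hw' t ht

theorem mono (hTS : T ⊆ S) (h : ReachAvoid G S x y) : ReachAvoid G T x y := by
  obtain ⟨w, hw⟩ := h
  exact ⟨w, fun t ht htT => hw t ht (hTS htT)⟩

theorem refl (hx : x ∉ S) : ReachAvoid G S x x :=
  ⟨.nil, by simpa using hx⟩

theorem of_adj (hx : x ∉ S) (hy : y ∉ S) (h : G.Adj x y) : ReachAvoid G S x y :=
  ⟨h.toWalk, by simp [hx, hy]⟩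

theorem right_notMem (h : ReachAvoid G S x y) : y ∉ S := by
  obtain ⟨w, hw⟩ := h
  exact hw y w.end_mem_support

/-- A walk from `x ∉ S` that may use `v` but no other vertex of `S` either avoids `S` altogether,
or has an initial part that avoids `S` and ends at a neighbour of `v`. -/
theorem or_exists_adj (hx : x ∉ S) (h : ReachAvoid G (S \ {v}) x y) :
    ReachAvoid G S x y ∨ ∃ u, ReachAvoid G S x u ∧ G.Adj u v := by
  obtain ⟨w, hw⟩ := h
  induction w with
  | nil => exact .inl (refl hx)
  | @cons x z y hxz p ih =>
    by_cases hz : z ∈ S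
    · have hzv : z = v := by
        by_contra hne
        exact hw z (by simp) ⟨hz, hne⟩
      exact .inr ⟨x, refl hx, hzv ▸ hxz⟩
    · have hstep := of_adj hx hz hxz
      rcases ih hz (fun t ht => hw t (by simp [ht])) with h | ⟨u, hu, huv⟩
      · exact .inl (hstep.trans h)
      · exact .inr ⟨u, hstep.trans hu, huv⟩

end ReachAvoid

/-- For an `(a,b)` vertex separator `S` with components `C₁ ∋ a`,
`C₂ ∋ b` of `G \ S` (described via reachability from `a` resp. `b` avoiding `S`),
`S` is minimal iff every `v ∈ S` has a neighbour in `C₁` and a neighbour in `C₂`. -/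
theorem stmt_0 {V : Type*} [Fintype V] (G : SimpleGraph V) (a b : V) (hab : a ≠ b)
    (S : Set V) (hS : IsABSeparator G a b S) :
    IsMinABSeparator G a b S ↔
      ∀ v ∈ S, (∃ u₁ : V, ReachAvoid G S a u₁ ∧ G.Adj u₁ v) ∧
               (∃ u₂ : V, ReachAvoid G S b u₂ ∧ G.Adj u₂ v) := by
  constructor
  · rintro ⟨-, hmin⟩ v hv
    obtain ⟨ha, hb, hsep⟩ := hS
    have hreach : ReachAvoid G (S \ {v}) a b := by
      by_contra hn
      exact hmin (S \ {v}) (Set.sdiff_singleton_ssubset.mpr hv)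
        ⟨fun h => ha h.1, fun h => hb h.1, hn⟩
    exact ⟨(hreach.or_exists_adj ha).resolve_left hsep,
      (hreach.symm.or_exists_adj hb).resolve_left fun h => hsep h.symm⟩
  · refine fun h => ⟨hS, fun S' hS' hsep => ?_⟩
    obtain ⟨v, hv, hv'⟩ := Set.exists_of_ssubset hS'
    obtain ⟨⟨u₁, h₁, hadj₁⟩, u₂, h₂, hadj₂⟩ := h v hv
    have h₁' := h₁.mono hS'.subset
    have h₂' := h₂.mono hS'.subset
    exact hsep.2.2 ((h₁'.trans (.of_adj h₁'.right_notMem hv' hadj₁)).trans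
      (h₂'.trans (.of_adj h₂'.right_notMem hv' hadj₂)).symm)
end

section
/- If a simple graph G has the property that for every pair of distinct vertices a, b every minimal (a,b) vertex separator of G is an independent (stable) set, then G contains no induced subgraph that is a cycle of length at least 4 with exactly one chord (i.e., G is 1-chord free). -/
/-- In `ZMod n`, adding one increases the representative by one unless it wraps around to `0`. -/
lemma val_succ_of_ne_zero {n : ℕ} (hn : 4 ≤ n) (z : ZMod n) (hz : z + 1 ≠ 0) :
    (z + 1).val = z.val + 1 := by
  have : NeZero n := ⟨by omega⟩
  have : Fact (1 < n) := ⟨by omega⟩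
  have h1 : (z + 1).val = (z.val + 1) % n := by rw [ZMod.val_add, ZMod.val_one]
  have hlt := ZMod.val_lt z
  have hne : (z + 1).val ≠ 0 := by rwa [Ne, ZMod.val_eq_zero]
  rcases Nat.lt_or_ge (z.val + 1) n with h | h
  · rw [h1, Nat.mod_eq_of_lt h]
  · have : z.val + 1 = n := by omega
    rw [this, Nat.mod_self] at h1
    exact absurd h1 hne

/-- If, among the vertices of a cycle, `S` contains at most `f i`, then the arc from `f (i + 1)`
through `f j` to `f (j + 1)` avoids `S`. -/
lemma reachAvoid_arc {V : Type*} {G : SimpleGraph V} {n : ℕ} (hn : 4 ≤ n) {f : ZMod n → V}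
    (hadj : ∀ x, G.Adj (f x) (f (x + 1))) {S : Set V} {i j : ZMod n} (hij : i ≠ j + 1)
    (hS : ∀ x, f x ∈ S → x = i) : ReachAvoid G S (f (i + 1)) (f (j + 1)) := by
  have : NeZero n := ⟨by omega⟩
  -- walk along the cycle for as long as the position relative to `i` does not wrap around
  have key : ∀ k : ℕ, k + 1 < n → ReachAvoid G S (f (i + 1)) (f (i + 1 + (k : ZMod n))) := by
    intro k
    induction k with
    | zero =>
      intro hk
      have h1 : f (i + 1) ∉ S := by
        intro hm
        have h0 : ((1 : ℕ) : ZMod n) = 0 := by simpa using hS _ hm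
        rw [ZMod.natCast_eq_zero_iff] at h0
        have := Nat.le_of_dvd (by omega) h0
        omega
      simp only [Nat.cast_zero, add_zero]
      exact ⟨.nil, by simpa using h1⟩
    | succ k ih =>
      intro hk
      obtain ⟨w, hw⟩ := ih (by omega)
      have h1 : f (i + 1 + ((k + 1 : ℕ) : ZMod n)) ∉ S := by
        intro hm
        have h0 : ((k + 1 + 1 : ℕ) : ZMod n) = 0 := by
          have := hS _ hm
          push_cast at this ⊢
          linear_combination this
        rw [ZMod.natCast_eq_zero_iff] at h0
        have := Nat.le_of_dvd (by omega) h0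
        omega
      have h2 : G.Adj (f (i + 1 + (k : ZMod n))) (f (i + 1 + ((k + 1 : ℕ) : ZMod n))) := by
        have := hadj (i + 1 + (k : ZMod n))
        rwa [show i + 1 + (k : ZMod n) + 1 = i + 1 + ((k + 1 : ℕ) : ZMod n) by
          push_cast; ring] at this
      refine ⟨w.concat h2, fun z hz => ?_⟩
      rw [SimpleGraph.Walk.support_concat] at hz
      simp only [List.mem_append, List.mem_singleton] at hz
      rcases hz with hz | rfl
      · exact hw z hz
      · exact h1
  have hv := val_succ_of_ne_zero hn (j - i) (fun h0 => hij (by linear_combination -h0))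
  have hlt := ZMod.val_lt (j - i + 1)
  have := key (j - i).val (by omega)
  rwa [ZMod.natCast_zmod_val, show i + 1 + (j - i) = j + 1 by ring] at this

/-- Deleting the ends of the unique chord, and all vertices off the cycle, separates the two
arcs. -/
lemma not_reachAvoid_arcs {V : Type*} {G : SimpleGraph V} {n : ℕ} (hn : 4 ≤ n) {f : ZMod n → V}
    (hf : Function.Injective f) {i j : ZMod n} (hji : j ≠ i) (hji1 : j ≠ i + 1)
    (hij1 : i ≠ j + 1)
    (hadj : ∀ x y : ZMod n, G.Adj (f x) (f y) →
        ((y = x + 1 ∨ x = y + 1) ∨ (x = i ∧ y = j) ∨ (x = j ∧ y = i))) :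
    ¬ ReachAvoid G {z | ∀ x, z = f x → x = i ∨ x = j} (f (i + 1)) (f (j + 1)) := by
  have : NeZero n := ⟨by omega⟩
  have : Fact (1 < n) := ⟨by omega⟩
  -- the arc strictly between `i` and `j` is closed under steps of walks avoiding the set
  have key : ∀ (u v : V) (w : G.Walk u v),
      (∀ z ∈ w.support, z ∉ {z | ∀ x, z = f x → x = i ∨ x = j}) →
      (∃ x, u = f x ∧ (x - i).val < (j - i).val) →
      ∃ x, v = f x ∧ (x - i).val < (j - i).val := by
    intro u v w
    induction w with
    | nil => exact fun _ h => h
    | @cons u t v h p ih =>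
      intro hav hu
      refine ih (fun z hz => hav z (by simp [hz])) ?_
      obtain ⟨x, rfl, hx⟩ := hu
      have hxS := hav (f x) (by simp)
      have htS := hav t (by simp)
      simp only [Set.mem_ofPred_eq, not_forall, not_or] at hxS htS
      obtain ⟨x', hxx, hxi, hxj⟩ := hxS
      obtain rfl := hf hxx
      obtain ⟨y, rfl, hyi, hyj⟩ := htS
      refine ⟨y, rfl, ?_⟩
      rcases hadj _ _ h with (rfl | rfl) | h | h
      · have e := val_succ_of_ne_zero hn (x - i) (fun h0 => hyi (by linear_combination h0))
        rw [show x - i + 1 = x + 1 - i by ring] at e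
        have hne : (x + 1 - i).val ≠ (j - i).val := fun h0 =>
          hyj (by linear_combination ZMod.val_injective n h0)
        omega
      · have e := val_succ_of_ne_zero hn (y - i) (fun h0 => hxi (by linear_combination h0))
        rw [show y - i + 1 = y + 1 - i by ring] at e
        omega
      · exact absurd h.1 hxi
      · exact absurd h.1 hxj
  rintro ⟨w, hw⟩
  obtain ⟨x, hx, hlt⟩ := key _ _ w hw ⟨i + 1, rfl, by
    have h0 : (j - i).val ≠ 0 := by
      rw [Ne, ZMod.val_eq_zero]; exact sub_ne_zero.2 hji
    have h1 : (j - i).val ≠ (1 : ZMod n).val := fun h0 =>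
      hji1 (by linear_combination ZMod.val_injective n h0)
    rw [ZMod.val_one] at h1
    rw [add_sub_cancel_left, ZMod.val_one]
    omega⟩
  obtain rfl := hf hx
  have e := val_succ_of_ne_zero hn (j - i) (fun h0 => hij1 (by linear_combination -h0))
  rw [show j - i + 1 = j + 1 - i by ring] at e
  omega

/-- If every minimal `(a,b)` vertex separator of `G` is a stable
set, then `G` is 1-chord free. -/
theorem stmt_2 {V : Type*} [Fintype V] (G : SimpleGraph V)
    (h : ∀ a b : V, a ≠ b → ∀ S : Set V, IsMinABSeparator G a b S → IsStableSet G S) :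
    OneChordFree G := by
  rintro W ⟨n, hn, f, hf, -, i, j, hji, hji1, hij1, hadj⟩
  have : Fact (1 < n) := ⟨by omega⟩
  have hsucc : ∀ x, G.Adj (f x) (f (x + 1)) := fun x => (hadj _ _).2 (.inl (.inl rfl))
  have hsep : IsABSeparator G (f (i + 1)) (f (j + 1)) {z | ∀ x, z = f x → x = i ∨ x = j} := by
    refine ⟨fun hm => ?_, fun hm => ?_,
      not_reachAvoid_arcs hn hf hji hji1 hij1 fun x y => (hadj x y).1⟩
    · rcases hm _ rfl with h0 | h0
      · simp at h0
      · exact hji1 h0.symm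
    · rcases hm _ rfl with h0 | h0
      · exact hij1 h0.symm
      · simp at h0
  obtain ⟨S, hSle, hS⟩ :=
    exists_minimal_le_of_wellFoundedLT (IsABSeparator G (f (i + 1)) (f (j + 1))) _ hsep
  have hSC : ∀ x, f x ∈ S → x = i ∨ x = j := fun x hx => hSle hx x rfl
  have hj : f j ∈ S := by
    by_contra hj
    exact hS.prop.2.2 (reachAvoid_arc hn hsucc hij1 fun x hx =>
      (hSC x hx).resolve_right fun e => hj (e ▸ hx))
  have hi : f i ∈ S := by
    by_contra hi
    obtain ⟨w, hw⟩ := reachAvoid_arc (S := S) hn hsucc hji1 fun x hx =>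
      (hSC x hx).resolve_left fun e => hi (e ▸ hx)
    exact hS.prop.2.2 ⟨w.reverse, by simpa using hw⟩
  refine h _ _ (fun e => hji ?_) S ⟨hS.prop, fun S' hlt => hS.not_prop_of_lt hlt⟩ _ hi _ hj
    ((hadj i j).2 (.inr (.inl ⟨rfl, rfl⟩)))
  exact (add_right_cancel (hf e)).symm
end

section
/- Let G be a simple graph that is not complete and has vertex connectivity at least 2. If G is 1-chord free, then G is triangle free (G contains no three mutually adjacent vertices). -/
/-- A path `p 0, …, p (k+1)` together with the edge `p 0 p (k+1)` as its only chord, and a vertex `c`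
adjacent to exactly the two ends of the path, form a cycle with exactly one chord. -/
lemma IsOneChordSet.of_path {V : Type*} {G : SimpleGraph V} (k : ℕ) (hk : 1 ≤ k) (p : ℕ → V) (c : V)
    (hinj : ∀ i j, i < j → j ≤ k + 1 → p i ≠ p j)
    (hc : ∀ i, i ≤ k + 1 → p i ≠ c)
    (hadj : ∀ i j, i < j → j ≤ k + 1 → (G.Adj (p i) (p j) ↔ j = i + 1 ∨ (i = 0 ∧ j = k + 1)))
    (hcadj : ∀ i, i ≤ k + 1 → (G.Adj (p i) c ↔ i = 0 ∨ i = k + 1)) :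
    ∃ W, IsOneChordSet G W := by
  let q : ℕ → V := fun t => if t ≤ k + 1 then p t else c
  have hqp : ∀ t, t ≤ k + 1 → q t = p t := fun t ht => if_pos ht
  have hqc : q (k + 2) = c := if_neg (by omega)
  have hqinj : ∀ i j, i < j → j ≤ k + 2 → q i ≠ q j := by
    intro i j hij hj
    rcases Nat.lt_or_ge j (k + 2) with h | h
    · rw [hqp i (by omega), hqp j (by omega)]
      exact hinj i j hij (by omega)
    · obtain rfl : j = k + 2 := by omega
      rw [hqp i (by omega), hqc]
      exact hc i (by omega)
  have hqadj : ∀ i j, i < j → j ≤ k + 2 →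
      (G.Adj (q i) (q j) ↔ j = i + 1 ∨ (i = 0 ∧ j = k + 1) ∨ (i = 0 ∧ j = k + 2)) := by
    intro i j hij hj
    rcases Nat.lt_or_ge j (k + 2) with h | h
    · rw [hqp i (by omega), hqp j (by omega), hadj i j hij (by omega)]
      omega
    · obtain rfl : j = k + 2 := by omega
      rw [hqp i (by omega), hqc, hcadj i (by omega)]
      omega
  -- `ZMod (k + 3)` is by definition `Fin (k + 3)`.
  have key : ∃ f : Fin (k + 3) → V, Function.Injective f ∧ Set.range f = Set.range f ∧
      ∃ i j : Fin (k + 3), j ≠ i ∧ j ≠ i + 1 ∧ i ≠ j + 1 ∧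
        ∀ x y : Fin (k + 3), G.Adj (f x) (f y) ↔
          ((y = x + 1 ∨ x = y + 1) ∨ (x = i ∧ y = j) ∨ (x = j ∧ y = i)) := by
    have hsucc : ∀ x y : Fin (k + 3),
        y = x + 1 ↔ (y.val = x.val + 1 ∨ (x.val = k + 2 ∧ y.val = 0)) := by
      intro x y
      have hx := x.isLt
      have hy := y.isLt
      rw [Fin.ext_iff, Fin.val_add_one]
      split_ifs with h
      · rw [Fin.ext_iff, Fin.val_last] at h
        omega
      · rw [Fin.ext_iff, Fin.val_last] at h
        omega
    refine ⟨fun x => q x.val, ?_, rfl, ⟨0, by omega⟩, ⟨k + 1, by omega⟩, ?_, ?_, ?_, ?_⟩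
    · intro x y hxy
      have hx := x.isLt
      have hy := y.isLt
      rcases lt_trichotomy x.val y.val with h | h | h
      · exact absurd hxy (hqinj _ _ h (by omega))
      · exact Fin.ext h
      · exact absurd hxy.symm (hqinj _ _ h (by omega))
    · rw [ne_eq, Fin.ext_iff]; simp
    · rw [ne_eq, hsucc]; simp; omega
    · rw [ne_eq, hsucc]; simp
    · intro x y
      have hx := x.isLt
      have hy := y.isLt
      rw [hsucc, hsucc]
      simp only [Fin.ext_iff]
      rcases lt_trichotomy x.val y.val with h | h | h
      · rw [hqadj _ _ h (by omega)]
        omega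
      · rw [h]
        simp only [SimpleGraph.irrefl, false_iff]
        omega
      · rw [G.adj_comm, hqadj _ _ h (by omega)]
        omega
  obtain ⟨f, hf⟩ := key
  exact ⟨Set.range f, k + 3, by omega, f, hf⟩

/-- An ear on `K` with `k ≥ 1` interior vertices: `p 0, …, p (k+1)` is a walk joining two distinct
vertices of `K` whose interior vertices lie outside `K`. Repeated vertices are not excluded, and the
values of `p` beyond `k + 1` are irrelevant. -/
structure IsEar {V : Type*} (G : SimpleGraph V) (K : Set V) (k : ℕ) (p : ℕ → V) : Prop where
  pos : 1 ≤ k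
  start_mem : p 0 ∈ K
  end_mem : p (k + 1) ∈ K
  start_ne_end : p 0 ≠ p (k + 1)
  notMem : ∀ i, 1 ≤ i → i ≤ k → p i ∉ K
  adj : ∀ i, i ≤ k → G.Adj (p i) (p (i + 1))

/-- Stopping a walk when it first enters `K`. -/
lemma exists_first_entry {V : Type*} {G : SimpleGraph V} (K : Set V) {x y : V} (w : G.Walk x y) :
    x ∉ K → y ∈ K → ∃ (n : ℕ) (q : ℕ → V), q 0 = x ∧ q (n + 1) ∈ K ∧ (∀ i, i ≤ n → q i ∉ K) ∧
      ∀ i, i ≤ n → G.Adj (q i) (q (i + 1)) := by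
  induction w with
  | nil => exact fun h h' => absurd h' h
  | @cons x z y h w ih =>
    intro hx hy
    by_cases hz : z ∈ K
    · refine ⟨0, fun t => if t = 0 then x else z, by simp, by simpa using hz, ?_, ?_⟩
      · intro i hi
        obtain rfl : i = 0 := by omega
        simpa using hx
      · intro i hi
        obtain rfl : i = 0 := by omega
        simpa using h
    · obtain ⟨n, q, hq0, hqn, hqK, hqadj⟩ := ih hz hy
      refine ⟨n + 1, fun t => Nat.casesOn t x q, rfl, hqn, ?_, ?_⟩
      · rintro (_ | i) hi
        · exact hx
        · exact hqK i (by omega)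
      · rintro (_ | i) hi
        · change G.Adj x (q 0)
          rwa [hq0]
        · exact hqadj i (by omega)

/-- Connectedness gives a vertex `v ∉ K` with a neighbour `a ∈ K`; connectedness of `G - a` then
continues `a, v` to an ear. -/
lemma exists_isEar {V : Type*} {G : SimpleGraph V} (K : Set V)
    (hconn : ∀ S : Set V, S.ncard ≤ 1 → (G.induce Sᶜ).Connected)
    {x : V} (hx : x ∉ K) (hK : K.Nontrivial) : ∃ k p, IsEar G K k p := by
  obtain ⟨y, hy⟩ := hK.nonempty
  obtain ⟨w⟩ := (hconn ∅ (by simp)).preconnected ⟨x, by simp⟩ ⟨y, by simp⟩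
  obtain ⟨n, q, -, hqn, hqK, hqadj⟩ := exists_first_entry (Subtype.val ⁻¹' K) w hx hy
  have hv := hqK n le_rfl
  have hva : G.Adj (q n).1 (q (n + 1)).1 := hqadj n le_rfl
  replace hv : (q n).1 ∉ K := hv
  replace hqn : (q (n + 1)).1 ∈ K := hqn
  generalize (q n).1 = v at hv hva
  generalize (q (n + 1)).1 = a at hva hqn
  obtain ⟨b, hb, hba⟩ := hK.exists_ne a
  obtain ⟨w'⟩ := (hconn {a} (by simp)).preconnected ⟨v, by simpa using hva.ne⟩
    ⟨b, by simpa using hba⟩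
  obtain ⟨m, r, hr0, hrm, hrK, hradj⟩ := exists_first_entry (Subtype.val ⁻¹' K) w' hv hb
  let p : ℕ → V := fun t => Nat.casesOn t a fun s => (r s).1
  refine ⟨m + 1, p, by omega, hqn, hrm, ?_, ?_, ?_⟩
  · exact fun h => (r (m + 1)).2 h.symm
  · rintro (_ | i) h1 h2
    · omega
    · exact hrK i (by omega)
  · rintro (_ | i) hi
    · change G.Adj a (r 0).1
      rw [hr0]
      exact hva.symm
    · exact hradj i (by omega)

/-- In an ear with the fewest interior vertices, an edge that skips along the ear joins its ends. -/
lemma IsEar.eq_of_adj {V : Type*} {G : SimpleGraph V} {K : Set V} {k : ℕ} {p : ℕ → V}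
    (hp : IsEar G K k p) (hmin : ∀ m < k, ∀ q, ¬ IsEar G K m q) {i j : ℕ} (hij : i + 1 < j)
    (hj : j ≤ k + 1) (h : G.Adj (p i) (p j)) : i = 0 ∧ j = k + 1 := by
  by_contra hne
  -- The edge `p i p j` bypasses the `j - i - 1` vertices between its ends.
  obtain ⟨d, rfl⟩ : ∃ d, j = i + 1 + d := ⟨j - (i + 1), by omega⟩
  obtain ⟨m, rfl⟩ : ∃ m, k = m + d := ⟨k - d, by omega⟩
  refine hmin m (by omega) (fun t => if t ≤ i then p t else p (t + d)) ⟨by omega, ?_, ?_, ?_, ?_, ?_⟩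
  · simpa using hp.start_mem
  · rw [if_neg (by omega), show m + 1 + d = m + d + 1 by omega]
    exact hp.end_mem
  · rw [if_pos (by omega), if_neg (by omega), show m + 1 + d = m + d + 1 by omega]
    exact hp.start_ne_end
  · intro t h1 h2
    split_ifs
    · exact hp.notMem t h1 (by omega)
    · exact hp.notMem _ (by omega) (by omega)
  · intro t ht
    rcases lt_trichotomy t i with hti | rfl | hti
    · rw [if_pos (by omega), if_pos (by omega)]
      exact hp.adj t (by omega)
    · rw [if_pos (by omega), if_neg (by omega)]
      exact h
    · rw [if_neg (by omega), if_neg (by omega), show t + 1 + d = t + d + 1 by omega]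
      exact hp.adj _ (by omega)


/-- A non-complete graph of vertex connectivity at least 2
(removing any at most one vertex leaves a connected graph on at least two vertices)
that is 1-chord free is triangle free. -/
theorem stmt_4 {V : Type*} [Fintype V] (G : SimpleGraph V)
    (hnc : ∃ u v : V, u ≠ v ∧ ¬ G.Adj u v)
    (hconn : ∀ S : Set V, S.ncard ≤ 1 → (G.induce Sᶜ).Connected ∧ 2 ≤ Sᶜ.ncard)
    (h1cf : OneChordFree G) :
    ∀ u v w : V, ¬ (G.Adj u v ∧ G.Adj v w ∧ G.Adj u w) := by
  rintro u v w ⟨huv, hvw, huw⟩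
  have htri : G.IsClique {u, v, w} := by
    simp [SimpleGraph.isClique_iff, Set.pairwise_insert, huv, hvw, huw, huv.symm, hvw.symm,
      huw.symm]
  obtain ⟨K, hsub, hKmax⟩ := Finite.exists_le_maximal (p := fun s : Set V => G.IsClique s) htri
  have hK : G.IsClique K := hKmax.prop
  have hKu : u ∈ K := hsub (by simp)
  have hKv : v ∈ K := hsub (by simp)
  have hKw : w ∈ K := hsub (by simp)
  have hthird : ∀ a b : V, ∃ c ∈ K, c ≠ a ∧ c ≠ b := by
    intro a b
    have h1 := huv.ne
    have h2 := hvw.ne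
    have h3 := huw.ne
    by_contra! h
    have := h u hKu
    have := h v hKv
    have := h w hKw
    by_cases hua : u = a <;> by_cases hva : v = a <;> grind
  have hone : ∀ x, x ∉ K → ∀ a ∈ K, ∀ b ∈ K, G.Adj x a → G.Adj x b → a = b := by
    intro x hx a ha b hb hxa hxb
    by_contra hab
    obtain ⟨c, hc, hxc⟩ : ∃ c ∈ K, ¬ G.Adj x c := by
      by_contra! h
      have hins : G.IsClique (insert x K) := hK.insert fun y hy _ => h y hy
      exact hx (hKmax.le_of_ge hins (Set.subset_insert x K) (Set.mem_insert x K))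
    have hca : a ≠ c := fun h => hxc (h ▸ hxa)
    have hcb : b ≠ c := fun h => hxc (h ▸ hxb)
    have hcx : x ≠ c := fun h => hx (h ▸ hc)
    have e1 := hK ha hb hab
    have e2 := hK ha hc hca
    have e3 := hK hb hc hcb
    -- The cycle `a x b c` with chord `a b` is a diamond.
    obtain ⟨W, hW⟩ := IsOneChordSet.of_path (G := G) 1 le_rfl
      (fun t => if t = 0 then a else if t = 1 then x else b) c
      (by
        intro i j hij hj
        have := hxa.ne
        have := hxb.ne
        interval_cases j <;> interval_cases i <;> simp_all [eq_comm])
      (by intro i hi; interval_cases i <;> simp_all)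
      (by
        intro i j hij hj
        have := hxa.symm
        interval_cases j <;> interval_cases i <;> simp_all)
      (by intro i hi; interval_cases i <;> simp_all)
    exact h1cf W hW
  obtain ⟨x, hx⟩ : ∃ x, x ∉ K := by
    obtain ⟨s, t, hst, hnadj⟩ := hnc
    by_contra! h
    exact hnadj (hK (h s) (h t) hst)
  have hear := exists_isEar K (fun S hS => (hconn S hS).1) hx ⟨u, hKu, v, hKv, huv.ne⟩
  classical
  obtain ⟨p, hp⟩ := Nat.find_spec hear
  have hmin : ∀ m < Nat.find hear, ∀ q, ¬ IsEar G K m q :=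
    fun m hm q hq => Nat.find_min hear hm ⟨q, hq⟩
  generalize Nat.find hear = k at hp hmin
  obtain ⟨c, hc, hca, hcb⟩ := hthird (p 0) (p (k + 1))
  have hpos := hp.pos
  have hpc : ∀ i, i ≤ k + 1 → p i ≠ c := by
    intro i hi h
    rcases Nat.eq_zero_or_pos i with rfl | h0
    · exact hca h.symm
    rcases Nat.lt_or_ge k i with h2 | h2
    · obtain rfl : i = k + 1 := by omega
      exact hcb h.symm
    · exact hp.notMem i h0 h2 (h ▸ hc)
  suffices hW : ∃ W, IsOneChordSet G W from h1cf _ hW.choose_spec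
  refine IsOneChordSet.of_path k hpos p c ?_ hpc ?_ ?_
  · intro i j hij hj h
    rcases Nat.lt_or_ge k j with h2 | h2
    · obtain rfl : j = k + 1 := by omega
      rcases Nat.eq_zero_or_pos i with rfl | h0
      · exact hp.start_ne_end h
      · exact hp.notMem i h0 (by omega) (h ▸ hp.end_mem)
    · rcases Nat.eq_zero_or_pos i with rfl | h0
      · exact hp.notMem j (by omega) h2 (h ▸ hp.start_mem)
      · -- A repetition `p i = p j` makes `p i` adjacent to `p (j + 1)`.
        have := hp.eq_of_adj hmin (i := i) (j := j + 1) (by omega) (by omega) (h ▸ hp.adj j h2)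
        omega
  · intro i j hij hj
    constructor
    · intro h
      by_cases hs : j = i + 1
      · exact Or.inl hs
      · exact Or.inr (hp.eq_of_adj hmin (by omega) hj h)
    · rintro (rfl | ⟨rfl, rfl⟩)
      · exact hp.adj i (by omega)
      · exact hK hp.start_mem hp.end_mem hp.start_ne_end
  · intro i hi
    constructor
    · intro h
      by_contra! hne
      rcases Nat.lt_or_ge i k with hik | hik
      · -- `p 0, …, p i, c` is a shorter ear.
        refine hmin i hik (fun t => if t ≤ i then p t else c) ⟨by omega, ?_, ?_, ?_, ?_, ?_⟩
        · simpa using hp.start_mem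
        · simpa using hc
        · simpa using hca.symm
        · intro t h1 h2
          rw [if_pos h2]
          exact hp.notMem t h1 (by omega)
        · intro t ht
          rcases ht.lt_or_eq with hti | rfl
          · rw [if_pos (by omega), if_pos (by omega)]
            exact hp.adj t (by omega)
          · simpa using h
      · obtain rfl : i = k := by omega
        exact hcb (hone _ (hp.notMem i hpos le_rfl) c hc _ hp.end_mem h (hp.adj i le_rfl))
    · rintro (rfl | rfl)
      · exact hK hp.start_mem hc hca.symm
      · exact hK hp.end_mem hc hcb.symm
end

section
/- Let G be a connected simple graph that is not a tree (i.e., G contains a cycle). Then there exist distinct vertices a, b of G and a minimal (a,b) edge separator E' of G such that E' is not a matching; specifically, E' contains two edges sharing a common endpoint. -/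
/-!
Let `v` be a vertex on a cycle and `x`, `y` its two neighbours there, so that `x` and `y` are
joined by a walk avoiding `v`. Let `C` be the component of `x` once all edges at `v` are deleted,
and let `E'` be the set of edges from `v` into `C`. Then `E'` separates `v` from `x`, since no other
edge leaves `C`; and it is minimal, since putting back any edge `vw` of `E'` reconnects `v` to `x`
through `w` inside `C`. It contains both `vx` and `vy`.
-/

/-- `E'` is an `(a,b)` edge separator: a set of edges of `G` whose deletion puts
`a` and `b` in distinct connected components. -/
def IsABEdgeSeparator {V : Type*} (G : SimpleGraph V) (a b : V) (E' : Set (Sym2 V)) : Prop :=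
  E' ⊆ G.edgeSet ∧ ¬ (G.deleteEdges E').Reachable a b

/-- `E'` is a minimal `(a,b)` edge separator: it is one, and no proper subset is. -/
def IsMinABEdgeSeparator {V : Type*} (G : SimpleGraph V) (a b : V) (E' : Set (Sym2 V)) : Prop :=
  IsABEdgeSeparator G a b E' ∧ ∀ F ⊂ E', ¬ IsABEdgeSeparator G a b F

/-- A set of edges is a matching if no two of its edges share a common endpoint. -/
def IsMatchingSet {V : Type*} (E' : Set (Sym2 V)) : Prop :=
  ∀ e ∈ E', ∀ f ∈ E', e ≠ f → ∀ v : V, ¬ (v ∈ e ∧ v ∈ f)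

/-- The edges joining `v` to the component of `x` in `G` with all edges at `v` deleted. -/
def edgesInto {V : Type*} (G : SimpleGraph V) (v x : V) : Set (Sym2 V) :=
  {e | ∃ w, e = s(v, w) ∧ G.Adj v w ∧ (G.deleteEdges (G.incidenceSet v)).Reachable x w}

theorem isMinABEdgeSeparator_edgesInto {V : Type*} (G : SimpleGraph V) {v x : V} (hvx : v ≠ x) :
    IsMinABEdgeSeparator G v x (edgesInto G v x) := by
  refine ⟨⟨?_, ?_⟩, ?_⟩
  · rintro e ⟨w, rfl, hw, -⟩
    exact hw
  · intro hr
    have hxv := hr.symm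
    rw [SimpleGraph.reachable_iff_reflTransGen] at hxv
    -- A walk starting at `x` and avoiding `edgesInto G v x` never leaves the component of `x`.
    have key : ∀ w, Relation.ReflTransGen (G.deleteEdges (edgesInto G v x)).Adj x w →
        w ≠ v ∧ (G.deleteEdges (G.incidenceSet v)).Reachable x w := by
      intro w h
      induction h with
      | refl => exact ⟨hvx.symm, SimpleGraph.Reachable.refl _⟩
      | @tail b c _ hbc ih =>
        obtain ⟨hb, hxb⟩ := ih
        rw [SimpleGraph.deleteEdges_adj] at hbc
        have hc : c ≠ v := by
          rintro rfl
          exact hbc.2 ⟨b, Sym2.eq_swap, hbc.1.symm, hxb⟩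
        refine ⟨hc, hxb.trans (SimpleGraph.Adj.reachable ?_)⟩
        rw [SimpleGraph.deleteEdges_adj]
        refine ⟨hbc.1, fun h => ?_⟩
        rcases Sym2.mem_iff.1 h.2 with h | h
        · exact hb h.symm
        · exact hc h.symm
    exact (key v hxv).1 rfl
  · rintro F hF ⟨-, hsep⟩
    obtain ⟨hsub, e, he, heF⟩ := Set.ssubset_iff_exists.1 hF
    obtain ⟨w, rfl, hvw, hxw⟩ := he
    apply hsep
    have hle : G.deleteEdges (G.incidenceSet v) ≤ G.deleteEdges F := by
      apply SimpleGraph.deleteEdges_anti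
      intro e he
      obtain ⟨u, rfl, hu, -⟩ := hsub he
      exact ⟨hu, Sym2.mem_mk_left _ _⟩
    have hadj : (G.deleteEdges F).Adj v w := SimpleGraph.deleteEdges_adj.2 ⟨hvw, heF⟩
    exact hadj.reachable.trans (hxw.mono hle).symm

/-- A vertex on a cycle, with its two neighbours on it: the cycle comes from a non-bridge `vx` and a
path from `v` to `x` avoiding that edge, whose second vertex is `y`. -/
theorem exists_two_neighbours {V : Type*} (G : SimpleGraph V) (hcyc : ¬ G.IsAcyclic) :
    ∃ v x y : V, G.Adj v x ∧ G.Adj v y ∧ x ≠ y ∧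
      (G.deleteEdges (G.incidenceSet v)).Reachable x y := by
  classical
  rw [SimpleGraph.isAcyclic_iff_forall_adj_isBridge] at hcyc
  push Not at hcyc
  obtain ⟨v, x, hvx, hb⟩ := hcyc
  have hr : (G.deleteEdges {s(v, x)}).Reachable v x := by
    by_contra h
    exact hb (SimpleGraph.isBridge_iff.2 h)
  obtain ⟨p, hp⟩ := hr.exists_isPath
  cases p with
  | nil => exact absurd hvx (G.irrefl)
  | @cons _ y _ hvy q =>
    rw [SimpleGraph.Walk.cons_isPath_iff] at hp
    rw [SimpleGraph.deleteEdges_adj] at hvy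
    refine ⟨v, x, y, hvx, hvy.1, ?_, ?_⟩
    · rintro rfl
      exact hvy.2 rfl
    · refine (SimpleGraph.Walk.reachable (q.transfer _ ?_)).symm
      intro e he
      rw [SimpleGraph.edgeSet_deleteEdges]
      refine ⟨?_, fun h => hp.2 (SimpleGraph.Walk.mem_support_of_mem_edges he h.2)⟩
      have := q.edges_subset_edgeSet he
      rw [SimpleGraph.edgeSet_deleteEdges] at this
      exact this.1

/-- A connected graph that is not a tree has distinct vertices
`a, b` and a minimal `(a,b)` edge separator containing two edges with a common
endpoint (hence not a matching). -/
theorem stmt_8 {V : Type*} [Fintype V] (G : SimpleGraph V)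
    (hconn : G.Connected) (hcyc : ¬ G.IsAcyclic) :
    ∃ a b : V, a ≠ b ∧ ∃ E' : Set (Sym2 V), IsMinABEdgeSeparator G a b E' ∧
      ∃ e ∈ E', ∃ f ∈ E', e ≠ f ∧ ∃ v : V, v ∈ e ∧ v ∈ f := by
  obtain ⟨v, x, y, hvx, hvy, hxy, hr⟩ := exists_two_neighbours G hcyc
  exact ⟨v, x, hvx.ne, edgesInto G v x, isMinABEdgeSeparator_edgesInto G hvx.ne,
    s(v, x), ⟨x, rfl, hvx, SimpleGraph.Reachable.refl _⟩, s(v, y), ⟨y, rfl, hvy, hr⟩,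
    fun h => hxy (Sym2.congr_right.1 h), v, Sym2.mem_mk_left _ _, Sym2.mem_mk_left _ _⟩
end

section
/- A connected simple graph G has the property that for all pairs of distinct vertices a, b every minimal (a,b) edge separator of G induces a matching if and only if G is a tree (connected and acyclic). -/
/-- The edges joining `v` to the component of `u` in `G` with all edges at `v` removed. -/
def starCut {V : Type*} (G : SimpleGraph V) (v u : V) : Set (Sym2 V) :=
  {e | ∃ x, e = s(v, x) ∧ G.Adj v x ∧ (G.deleteEdges (G.incidenceSet v)).Reachable x u}

lemma starCut_subset_incidenceSet {V : Type*} (G : SimpleGraph V) (v u : V) :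
    starCut G v u ⊆ G.incidenceSet v := by
  rintro _ ⟨x, rfl, hx, -⟩
  exact ⟨hx, by simp⟩

lemma starCut_isMin {V : Type*} (G : SimpleGraph V) {v u : V} (huv : u ≠ v) :
    IsMinABEdgeSeparator G v u (starCut G v u) := by
  have hsub := starCut_subset_incidenceSet G v u
  refine ⟨⟨fun e he => (hsub he).1, fun hr => ?_⟩, fun F hF hsep => ?_⟩
  · -- A walk from `u` avoiding the cut never leaves the component of `u`, and never meets `v`.
    have key : ∀ x y, (G.deleteEdges (starCut G v u)).Walk x y →
        (x ≠ v ∧ (G.deleteEdges (G.incidenceSet v)).Reachable x u) → y ≠ v := by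
      intro x y p
      induction p with
      | nil => exact fun h => h.1
      | @cons x z y h p ih =>
        rintro ⟨hxv, hxu⟩
        rw [SimpleGraph.deleteEdges_adj] at h
        have hzv : z ≠ v := by
          rintro rfl
          exact h.2 ⟨x, Sym2.eq_swap, h.1.symm, hxu⟩
        refine ih ⟨hzv, SimpleGraph.Reachable.trans (SimpleGraph.Adj.reachable ?_) hxu⟩
        rw [SimpleGraph.deleteEdges_adj]
        refine ⟨h.1.symm, fun hi => ?_⟩
        have := hi.2
        rw [Sym2.mem_iff] at this
        rcases this with h' | h'
        · exact hzv h'.symm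
        · exact hxv h'.symm
    obtain ⟨p⟩ := hr.symm
    exact key _ _ p ⟨huv, .rfl⟩ rfl
  · obtain ⟨e, he, heF⟩ := Set.exists_of_ssubset hF
    obtain ⟨x, rfl, hvx, hxu⟩ := he
    refine hsep.2 (SimpleGraph.Reachable.trans (v := x) (SimpleGraph.Adj.reachable ?_) (hxu.mono ?_))
    · exact SimpleGraph.deleteEdges_adj.2 ⟨hvx, heF⟩
    · exact SimpleGraph.deleteEdges_anti (hF.subset.trans hsub)

/-- If `u` can be reached from `v` without the pair `vu`, then a path doing so leaves `v` along an
edge `vw` with `w ≠ u` and never returns to `v`. When `vu` is an edge, the two close up to a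
cycle. -/
lemma exists_second_edge {V : Type*} (G : SimpleGraph V) {u v : V} (huv : u ≠ v)
    (hb : ¬ G.IsBridge s(v, u)) :
    ∃ w, w ≠ u ∧ G.Adj v w ∧ (G.deleteEdges (G.incidenceSet v)).Reachable w u := by
  classical
  rw [SimpleGraph.isBridge_iff, not_not] at hb
  obtain ⟨p, hp⟩ := hb.exists_isPath
  cases p with
  | nil => exact absurd rfl huv
  | @cons _ w _ h q =>
    rw [SimpleGraph.Walk.cons_isPath_iff] at hp
    rw [SimpleGraph.deleteEdges_adj] at h
    refine ⟨w, ?_, h.1, ⟨q.transfer _ fun e he => ?_⟩⟩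
    · rintro rfl
      exact h.2 rfl
    · have hG := q.edges_subset_edgeSet he
      rw [SimpleGraph.edgeSet_deleteEdges] at hG ⊢
      exact ⟨hG.1, fun hi => hp.2 (q.mem_support_of_mem_edges he hi.2)⟩

/-- In an acyclic graph a minimal separator cannot contain two distinct edges. -/
lemma IsMinABEdgeSeparator.subsingleton_of_isAcyclic {V : Type*} {G : SimpleGraph V}
    (hG : G.IsAcyclic) {a b : V} (hab : G.Reachable a b) {E' : Set (Sym2 V)}
    (hE : IsMinABEdgeSeparator G a b E') : E'.Subsingleton := by
  classical
  obtain ⟨p, hp⟩ := hab.exists_isPath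
  obtain ⟨e, hep, heE⟩ : ∃ e ∈ p.edges, e ∈ E' := by
    by_contra! h
    refine hE.1.2 ⟨p.transfer _ fun e he => ?_⟩
    rw [SimpleGraph.edgeSet_deleteEdges]
    exact ⟨p.edges_subset_edgeSet he, h e he⟩
  have hsep : IsABEdgeSeparator G a b {e} := by
    refine ⟨by simpa using hE.1.1 heE, fun hr => ?_⟩
    obtain ⟨q, hq⟩ := hr.exists_isPath
    -- By uniqueness of paths, `q` is `p`, which uses the deleted edge `e`.
    have hpq := (hG.subsingleton_path a b).elim ⟨p, hp⟩
      ⟨q.mapLe (SimpleGraph.deleteEdges_le _), hq.mapLe _⟩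
    have heq : p = q.mapLe (SimpleGraph.deleteEdges_le _) := congrArg Subtype.val hpq
    rw [heq, SimpleGraph.Walk.edges_mapLe_eq_edges] at hep
    have := q.edges_subset_edgeSet hep
    rw [SimpleGraph.edgeSet_deleteEdges] at this
    exact this.2 rfl
  have hEe : E' = {e} := by
    by_contra hne
    exact hE.2 {e} ((Set.singleton_subset_iff.2 heE).ssubset_of_ne (Ne.symm hne)) hsep
  exact hEe ▸ Set.subsingleton_singleton

/-- A connected graph has the property that every minimal
`(a,b)` edge separator induces a matching iff it is a tree. -/
theorem stmt_9 {V : Type*} [Fintype V] (G : SimpleGraph V) (hconn : G.Connected) :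
    (∀ a b : V, a ≠ b → ∀ E' : Set (Sym2 V),
        IsMinABEdgeSeparator G a b E' → IsMatchingSet E') ↔ G.IsTree := by
  constructor
  · intro h
    refine ⟨hconn, SimpleGraph.isAcyclic_iff_forall_adj_isBridge.2 fun v u hvu => ?_⟩
    by_contra hb
    obtain ⟨w, hwu, hvw, hr⟩ := exists_second_edge G hvu.ne' hb
    refine h v u hvu.ne _ (starCut_isMin G hvu.ne') s(v, u) ⟨u, rfl, hvu, .rfl⟩
      s(v, w) ⟨w, rfl, hvw, hr⟩ (fun he => hwu ?_) v ⟨by simp, by simp⟩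
    exact (Sym2.congr_right.1 he).symm
  · intro hT a b _ E' hE e he f hf hne
    exact absurd (hE.subsingleton_of_isAcyclic hT.isAcyclic (hconn a b) he hf) hne
end

section
/- Let G be a simple graph, let a, b be distinct vertices, and let S be a minimal (a,b) vertex separator containing two adjacent vertices u and v. Let C₁ and C₂ be the components of G \ S containing a and b respectively. Then the union of a shortest u–v path whose internal vertices all lie in C₁, a shortest u–v path whose internal vertices all lie in C₂, and the edge {u,v} forms an induced cycle of length at least 4 with exactly one chord (the edge {u,v}) in G. -/
/-- `W` induces a 1-chord subgraph of `G` whose unique chord is the edge `{u, v}`. -/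
def IsOneChordSetWithChord {V : Type*} (G : SimpleGraph V) (W : Set V) (u v : V) : Prop :=
  ∃ n : ℕ, 4 ≤ n ∧ ∃ f : ZMod n → V, Function.Injective f ∧ Set.range f = W ∧
    ∃ i j : ZMod n, f i = u ∧ f j = v ∧ j ≠ i ∧ j ≠ i + 1 ∧ i ≠ j + 1 ∧
      ∀ x y : ZMod n, G.Adj (f x) (f y) ↔
        ((y = x + 1 ∨ x = y + 1) ∨ (x = i ∧ y = j) ∨ (x = j ∧ y = i))

/-- A shortest path among the `u`–`v` paths of length at least `2` with internal vertices
satisfying `P` has no chord, except possibly the edge joining its ends. -/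
lemma adj_getVert_of_shortest {V : Type*} {G : SimpleGraph V} {u v : V} (P : V → Prop)
    (p : G.Walk u v) (hp : p.IsPath)
    (hint : ∀ x ∈ p.support, x ≠ u → x ≠ v → P x)
    (hmin : ∀ q : G.Walk u v, q.IsPath → 2 ≤ q.length →
      (∀ x ∈ q.support, x ≠ u → x ≠ v → P x) → p.length ≤ q.length)
    {j k : ℕ} (hjk : j < k) (hk : k ≤ p.length) (h : G.Adj (p.getVert j) (p.getVert k)) :
    k = j + 1 ∨ (j = 0 ∧ k = p.length) := by
  by_contra hcon
  -- the shortcut that replaces the segment from position `j` to position `k` by the edge `h`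
  let q : G.Walk u v := (p.take j).append (SimpleGraph.Walk.cons h (p.drop k))
  have hlen : q.length = j + 1 + (p.length - k) := by
    simp only [q, SimpleGraph.Walk.length_append, SimpleGraph.Walk.length_cons,
      SimpleGraph.Walk.take_length, SimpleGraph.Walk.drop_length]
    omega
  have hsupp : q.support = p.support.take (j + 1) ++ p.support.drop k := by
    simp only [q, SimpleGraph.Walk.support_append, SimpleGraph.Walk.support_cons, List.tail_cons,
      SimpleGraph.Walk.support_take,
      SimpleGraph.Walk.drop_support_eq_support_drop_min, min_eq_left hk]
  have hsub : q.support.Sublist p.support := by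
    rw [hsupp]
    conv_rhs => rw [← List.take_append_drop k p.support]
    exact (List.take_sublist_take_left (by omega)).append (List.Sublist.refl _)
  have := hmin q (SimpleGraph.Walk.IsPath.mk' (hp.support_nodup.sublist hsub)) (by omega)
    (fun x hx => hint x (hsub.subset hx))
  omega

lemma getVert_internal {V : Type*} {G : SimpleGraph V} {u v : V} {p : G.Walk u v}
    (hp : p.IsPath) {P : V → Prop} (hint : ∀ x ∈ p.support, x ≠ u → x ≠ v → P x)
    {k : ℕ} (hk : 0 < k) (hk' : k < p.length) : P (p.getVert k) := by
  refine hint _ (p.getVert_mem_support k) (fun h => ?_) (fun h => ?_)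
  · rw [hp.getVert_eq_start_iff hk'.le] at h
    omega
  · rw [hp.getVert_eq_end_iff hk'.le] at h
    omega

/-- Vertices on the two sides of a separator are neither equal nor adjacent. -/
lemma not_link {V : Type*} {G : SimpleGraph V} {S : Set V} {a b x y : V}
    (hsep : ¬ ReachAvoid G S a b) (hx : ReachAvoid G S a x) (hy : ReachAvoid G S b y) :
    x ≠ y ∧ ¬ G.Adj x y := by
  obtain ⟨w, hw⟩ := hx
  obtain ⟨w', hw'⟩ := hy
  constructor
  · rintro rfl
    refine hsep ⟨w.append w'.reverse, fun z hz => ?_⟩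
    rw [SimpleGraph.Walk.mem_support_append_iff, SimpleGraph.Walk.support_reverse,
      List.mem_reverse] at hz
    exact hz.elim (hw z) (hw' z)
  · intro h
    refine hsep ⟨w.append (SimpleGraph.Walk.cons h w'.reverse), fun z hz => ?_⟩
    rw [SimpleGraph.Walk.mem_support_append_iff, SimpleGraph.Walk.support_cons, List.mem_cons,
      SimpleGraph.Walk.support_reverse, List.mem_reverse] at hz
    rcases hz with hz | rfl | hz
    · exact hw z hz
    · exact hw _ w.end_mem_support
    · exact hw' z hz

lemma zmod_eq_add_one_iff {n : ℕ} [NeZero n] (hn : 1 < n) (x y : ZMod n) :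
    y = x + 1 ↔ y.val = x.val + 1 ∨ (y.val = 0 ∧ x.val + 1 = n) := by
  have : Fact (1 < n) := ⟨hn⟩
  rw [← (ZMod.val_injective n).eq_iff, ZMod.val_add, ZMod.val_one]
  have hx := x.val_lt
  have hy := y.val_lt
  rcases Nat.lt_or_ge (x.val + 1) n with h | h
  · rw [Nat.mod_eq_of_lt h]
    omega
  · have : x.val + 1 = n := by omega
    rw [this, Nat.mod_self]
    omega

/-- A cyclic enumeration by `0, …, n - 1` whose adjacencies are known for ordered pairs of
positions gives an induced cycle with the unique chord joining positions `0` and `l`. -/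
lemma oneChord_of_nat {V : Type*} {G : SimpleGraph V} {W : Set V} {n l : ℕ} (hl : 2 ≤ l)
    (hln : l + 2 ≤ n) (g : ℕ → V) (hW : ∀ x, x ∈ W ↔ ∃ k < n, g k = x)
    (hinj : ∀ j k, j < k → k < n → g j ≠ g k)
    (hadj : ∀ j k, j < k → k < n →
      (G.Adj (g j) (g k) ↔ k = j + 1 ∨ (j = 0 ∧ k + 1 = n) ∨ (j = 0 ∧ k = l))) :
    IsOneChordSetWithChord G W (g 0) (g l) := by
  have : NeZero n := ⟨by omega⟩
  have hlv : ((l : ℕ) : ZMod n).val = l := ZMod.val_natCast_of_lt (by omega)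
  have h0v : (0 : ZMod n).val = 0 := ZMod.val_zero
  have hval : ∀ x y : ZMod n, x = y ↔ x.val = y.val := fun x y =>
    (ZMod.val_injective n).eq_iff.symm
  refine ⟨n, by omega, fun x => g x.val, ?_, ?_, 0, (l : ZMod n), by simp only [h0v],
    by simp only [hlv], ?_, ?_, ?_, ?_⟩
  · intro x y hxy
    rw [hval]
    rcases lt_trichotomy x.val y.val with h | h | h
    · exact absurd hxy (hinj _ _ h y.val_lt)
    · exact h
    · exact absurd hxy.symm (hinj _ _ h x.val_lt)
  · ext x
    rw [hW]
    constructor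
    · rintro ⟨y, rfl⟩
      exact ⟨y.val, y.val_lt, rfl⟩
    · rintro ⟨k, hk, rfl⟩
      exact ⟨(k : ZMod n), by simp only [ZMod.val_natCast_of_lt hk]⟩
  · rw [Ne, hval, hlv, h0v]
    omega
  · rw [Ne, zmod_eq_add_one_iff (by omega), hlv, h0v]
    omega
  · rw [Ne, zmod_eq_add_one_iff (by omega), hlv, h0v]
    omega
  · intro x y
    rw [zmod_eq_add_one_iff (by omega), zmod_eq_add_one_iff (by omega), hval x, hval y, hval x,
      hval y, hlv, h0v]
    have hx := x.val_lt
    have hy := y.val_lt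
    rcases lt_trichotomy x.val y.val with h | h | h
    · rw [hadj _ _ h hy]
      omega
    · simp only [h, SimpleGraph.irrefl, false_iff]
      omega
    · rw [G.adj_comm, hadj _ _ h hx]
      omega

/-- Let `S` be a minimal `(a,b)` vertex separator containing two
adjacent vertices `u, v`, and let `C₁`, `C₂` be the components of `G \ S`
containing `a`, `b` (described via reachability avoiding `S`).  If `p₁` is a
shortest `u`–`v` path with at least one internal vertex, all of whose internal
vertices lie in `C₁`, and `p₂` is likewise through `C₂`, then the union of the
vertices of `p₁` and `p₂` induces a cycle of length at least 4 whose unique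
chord is the edge `{u, v}`. -/
theorem stmt_10 {V : Type*} [Fintype V] (G : SimpleGraph V) (a b : V) (hab : a ≠ b)
    (S : Set V) (hS : IsMinABSeparator G a b S)
    (u v : V) (hu : u ∈ S) (hv : v ∈ S) (huv : G.Adj u v)
    (p₁ : G.Walk u v) (hp₁ : p₁.IsPath) (hp₁len : 2 ≤ p₁.length)
    (hp₁int : ∀ x ∈ p₁.support, x ≠ u → x ≠ v → ReachAvoid G S a x)
    (hp₁min : ∀ q : G.Walk u v, q.IsPath → 2 ≤ q.length →
      (∀ x ∈ q.support, x ≠ u → x ≠ v → ReachAvoid G S a x) → p₁.length ≤ q.length)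
    (p₂ : G.Walk u v) (hp₂ : p₂.IsPath) (hp₂len : 2 ≤ p₂.length)
    (hp₂int : ∀ x ∈ p₂.support, x ≠ u → x ≠ v → ReachAvoid G S b x)
    (hp₂min : ∀ q : G.Walk u v, q.IsPath → 2 ≤ q.length →
      (∀ x ∈ q.support, x ≠ u → x ≠ v → ReachAvoid G S b x) → p₂.length ≤ q.length) :
    IsOneChordSetWithChord G
      ({x : V | x ∈ p₁.support} ∪ {x : V | x ∈ p₂.support}) u v := by
  have hsep := hS.1.2.2
  set l := p₁.length with hl
  set m := p₂.length with hm
  -- position `k` on the cycle: along `p₁`, then backwards along `p₂`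
  let g : ℕ → V := fun k => if k ≤ l then p₁.getVert k else p₂.getVert (l + m - k)
  have g1 : ∀ k, k ≤ l → g k = p₁.getVert k := fun k hk => if_pos hk
  have g2 : ∀ k, l < k → g k = p₂.getVert (l + m - k) := fun k hk => if_neg (by omega)
  have hgu : g 0 = u := by simp [g1]
  have hgv : g l = v := by simp [g1, hl]
  -- `p₂` also ends at `v`, so `g` follows `p₂` backwards from position `l`
  have g2' : ∀ k, l ≤ k → g k = p₂.getVert (l + m - k) := by
    intro k hk
    rcases hk.eq_or_lt with rfl | hk
    · rw [hgv, show l + m - l = p₂.length by omega, p₂.getVert_length]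
    · exact g2 k hk
  have hcross : ∀ j k, 0 < j → j < l → l < k → k < l + m → g j ≠ g k ∧ ¬ G.Adj (g j) (g k) := by
    intro j k hj hjl hk hkn
    rw [g1 j hjl.le, g2 k hk]
    exact not_link hsep (getVert_internal (P := ReachAvoid G S a) hp₁ hp₁int hj hjl)
      (getVert_internal (P := ReachAvoid G S b) hp₂ hp₂int (by omega) (by omega))
  have key : IsOneChordSetWithChord G
      ({x : V | x ∈ p₁.support} ∪ {x : V | x ∈ p₂.support}) (g 0) (g l) := by
    refine oneChord_of_nat (n := l + m) (l := l) hp₁len (by omega) g ?_ ?_ ?_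
    · intro x
      simp only [Set.mem_union, Set.mem_ofPred_eq, SimpleGraph.Walk.mem_support_iff_exists_getVert]
      constructor
      · rintro (⟨k, rfl, hk⟩ | ⟨k, rfl, hk⟩)
        · exact ⟨k, by omega, g1 k hk⟩
        · rcases Nat.eq_zero_or_pos k with rfl | hk0
          · exact ⟨0, by omega, by rw [hgu, p₂.getVert_zero]⟩
          · exact ⟨l + m - k, by omega, by
              rw [g2' _ (by omega), show l + m - (l + m - k) = k by omega]⟩
      · rintro ⟨k, hk, rfl⟩
        rcases le_or_gt k l with h | h
        · exact Or.inl ⟨k, (g1 k h).symm, h⟩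
        · exact Or.inr ⟨l + m - k, (g2 k h).symm, by omega⟩
    · intro j k hjk hk heq
      rcases le_or_gt k l with h | h
      · rw [g1 j (by omega), g1 k h] at heq
        have := hp₁.getVert_injOn (show j ≤ p₁.length by omega) (show k ≤ p₁.length by omega) heq
        omega
      · rcases Nat.eq_zero_or_pos j with rfl | hj
        · rw [hgu, g2 k h, eq_comm, hp₂.getVert_eq_start_iff (by omega)] at heq
          omega
        · rcases lt_or_ge j l with hjl | hjl
          · exact (hcross j k hj hjl h hk).1 heq
          · rw [g2' j hjl, g2 k h] at heq
            have := hp₂.getVert_injOn (show l + m - j ≤ p₂.length by omega)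
              (show l + m - k ≤ p₂.length by omega) heq
            omega
    · intro j k hjk hk
      constructor
      · intro hadj
        rcases le_or_gt k l with h | h
        · rw [g1 j (by omega), g1 k h] at hadj
          have := adj_getVert_of_shortest _ p₁ hp₁ hp₁int hp₁min hjk h hadj
          omega
        · rcases Nat.eq_zero_or_pos j with rfl | hj
          · rw [hgu.trans p₂.getVert_zero.symm, g2 k h] at hadj
            have := adj_getVert_of_shortest _ p₂ hp₂ hp₂int hp₂min (by omega) (by omega) hadj
            omega
          · rcases lt_or_ge j l with hjl | hjl
            · exact absurd hadj (hcross j k hj hjl h hk).2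
            · rw [g2' j hjl, g2 k h] at hadj
              have := adj_getVert_of_shortest _ p₂ hp₂ hp₂int hp₂min (by omega) (by omega)
                hadj.symm
              omega
      · rintro (rfl | ⟨rfl, hk1⟩ | ⟨rfl, rfl⟩)
        · rcases lt_or_ge j l with h | h
          · rw [g1 j h.le, g1 (j + 1) h]
            exact p₁.adj_getVert_succ h
          · rw [g2' j h, g2 (j + 1) (by omega),
              show l + m - j = l + m - (j + 1) + 1 by omega]
            exact (p₂.adj_getVert_succ (by omega)).symm
        · rw [hgu, g2 k (by omega), show l + m - k = 0 + 1 by omega]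
          have := p₂.adj_getVert_succ (i := 0) (by omega)
          rwa [p₂.getVert_zero] at this
        · rwa [hgu, hgv]
  rwa [hgu, hgv] at key
end

section
/- Let G be a connected simple graph containing a cycle C, and let a, b be two non-adjacent vertices on C. Let X be the set of vertices lying on at least one a–b path that does not contain a as an internal vertex, let Y = N(a) ∩ X, and let E' = { {a,x} : x ∈ Y }. Then E' is a minimal (a,b) edge separator of G, |E'| ≥ 2, and E' is not a matching (all edges of E' share the common endpoint a). -/
/-- The walks `p` in the description of `X` may be replaced, for neighbours `x` of `a`, by walks
from `x` to `b` avoiding `a`: cut `p` at `x`, respectively prepend the edge `ax`. -/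
lemma mem_Y_iff {V : Type*} (G : SimpleGraph V) (a b x : V) :
    x ∈ G.neighborSet a ∩ {x : V | ∃ p : G.Walk a b, a ∉ p.support.tail ∧ x ∈ p.support} ↔
      G.Adj a x ∧ ∃ q : G.Walk x b, a ∉ q.support := by
  classical
  constructor
  · rintro ⟨hx, p, hp, hxp⟩
    have hax : G.Adj a x := hx
    refine ⟨hax, ?_⟩
    cases p with
    | nil => simp at hxp; exact absurd hxp hax.ne'
    | cons h q =>
      simp only [SimpleGraph.Walk.support_cons, List.tail_cons] at hp
      simp only [SimpleGraph.Walk.support_cons, List.mem_cons] at hxp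
      have hxq : x ∈ q.support := hxp.resolve_left hax.ne'
      exact ⟨q.dropUntil x hxq, fun h' => hp (q.support_dropUntil_subset_support hxq h')⟩
  · rintro ⟨hax, q, hq⟩
    exact ⟨hax, SimpleGraph.Walk.cons hax q, by simpa using hq, by simp⟩

/-- The successor of `a` on a cycle through `b` reaches `b` along the cycle, avoiding `a`. -/
lemma snd_reaches {V : Type*} (G : SimpleGraph V) (a b : V) (hab : a ≠ b) (c : G.Walk a a)
    (hc : c.IsCycle) (hb : b ∈ c.support) :
    G.Adj a c.snd ∧ ∃ q : G.Walk c.snd b, a ∉ q.support := by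
  classical
  cases c with
  | nil => exact absurd hc SimpleGraph.Walk.not_isCycle_nil
  | cons h q =>
    have hq : q.IsPath := (SimpleGraph.Walk.cons_isCycle_iff q h).1 hc |>.1
    have hbq : b ∈ q.support := by
      simp only [SimpleGraph.Walk.support_cons, List.mem_cons] at hb
      exact hb.resolve_left hab.symm
    rw [SimpleGraph.Walk.snd_cons]
    exact ⟨h, q.takeUntil b hbq, SimpleGraph.Walk.endpoint_notMem_support_takeUntil hq hbq hab⟩

/-- Let `G` be connected with a cycle containing two
non-adjacent vertices `a, b`.  Let `X` be the set of vertices on some `a`–`b`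
walk not containing `a` as an internal vertex, `Y = N(a) ∩ X`, and
`E' = { {a,x} : x ∈ Y }`.  Then `E'` is a minimal `(a,b)` edge separator,
`|E'| ≥ 2`, all edges of `E'` share the endpoint `a`, and `E'` is not a
matching. -/
theorem stmt_13 {V : Type*} [Fintype V] (G : SimpleGraph V) (hconn : G.Connected)
    (w : V) (c : G.Walk w w) (hc : c.IsCycle)
    (a b : V) (ha : a ∈ c.support) (hb : b ∈ c.support)
    (hab : a ≠ b) (hnadj : ¬ G.Adj a b)
    (X : Set V) (hX : X = {x : V | ∃ p : G.Walk a b, a ∉ p.support.tail ∧ x ∈ p.support})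
    (Y : Set V) (hY : Y = G.neighborSet a ∩ X)
    (E' : Set (Sym2 V)) (hE : E' = (fun x => s(a, x)) '' Y) :
    IsMinABEdgeSeparator G a b E' ∧ 2 ≤ E'.ncard ∧
      (∀ e ∈ E', a ∈ e) ∧ ¬ IsMatchingSet E' := by
  classical
  have hYiff : ∀ x, x ∈ Y ↔ G.Adj a x ∧ ∃ q : G.Walk x b, a ∉ q.support := by
    intro x
    rw [hY, hX]
    exact mem_Y_iff G a b x
  have hstar : ∀ e ∈ E', a ∈ e := by
    rw [hE]
    rintro e ⟨x, -, rfl⟩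
    simp
  have htwo : ∃ x ∈ Y, ∃ y ∈ Y, x ≠ y := by
    have hc' := hc.rotate ha
    have hb' : b ∈ (c.rotate a ha).support := (SimpleGraph.Walk.mem_support_rotate_iff ..).2 hb
    refine ⟨_, (hYiff _).2 (snd_reaches G a b hab _ hc' hb'), _,
      (hYiff _).2 (snd_reaches G a b hab _ hc'.reverse (by simpa using hb')), ?_⟩
    rw [SimpleGraph.Walk.snd_reverse]
    exact hc'.snd_ne_penultimate
  obtain ⟨x, hx, y, hy, hxy⟩ := htwo
  have hxE : s(a, x) ∈ E' := hE ▸ ⟨x, hx, rfl⟩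
  have hyE : s(a, y) ∈ E' := hE ▸ ⟨y, hy, rfl⟩
  have hne : s(a, x) ≠ s(a, y) := fun h => hxy (Sym2.congr_right.1 h)
  refine ⟨⟨⟨?_, ?_⟩, ?_⟩, ?_, hstar, ?_⟩
  · rw [hE]
    rintro e ⟨z, hz, rfl⟩
    exact ((hYiff z).1 hz).1
  · intro hr
    obtain ⟨p, hp⟩ := hr.exists_isPath
    cases p with
    | nil => exact hab rfl
    | @cons _ z _ h q =>
      rw [SimpleGraph.Walk.cons_isPath_iff] at hp
      rw [SimpleGraph.deleteEdges_adj] at h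
      refine h.2 (hE ▸ ⟨z, (hYiff z).2 ⟨h.1, q.mapLe (G.deleteEdges_le E'), ?_⟩, rfl⟩)
      simpa using hp.2
  · rintro F hF ⟨-, hsep⟩
    obtain ⟨e, heE, heF⟩ := Set.exists_of_ssubset hF
    rw [hE] at heE
    obtain ⟨z, hz, rfl⟩ := heE
    obtain ⟨haz, q, hq⟩ := (hYiff z).1 hz
    have h1 : (G.deleteEdges F).Adj a z := SimpleGraph.deleteEdges_adj.2 ⟨haz, heF⟩
    have h2 : (G.deleteEdges F).Reachable z b :=
      ⟨q.toDeleteEdges F fun e he heF' => by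
        obtain ⟨t, rfl⟩ := hstar e (hF.1 heF')
        exact hq (q.fst_mem_support_of_mem_edges he)⟩
    exact hsep (h1.reachable.trans h2)
  · exact (Set.one_lt_ncard (Set.toFinite E')).2 ⟨_, hxE, _, hyE, hne⟩
  · intro hM
    exact hM _ hxE _ hyE hne a ⟨by simp, by simp⟩
end
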